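/- Consider the batch variant of DProp in which each decision step adds an arbitrary nonempty set E ⊆ U^{k-1} of undecided atoms to F (i.e., F^k = F^{k-1} ∪ E) before propagating. If such a batch DProp run on a normal logic program P over its finite atom set terminates with U^∞ = ∅ and T^∞ ∩ F^∞ = ∅, then its final true set T^∞ is a stable model of P. -/

import Mathlib

/-!
Since `F` only grows along a run, restarting the iteration from `T^{k-1}` reaches the same fixpoint
as starting from `∅`: every stage satisfies `T^k = C_{P,𝒜∖F^k}^∞(∅)`. When the run ends with
`U^m = ∅` and `T^m ∩ F^m = ∅`, the set `𝒜 ∖ F^m` is `T^m` itself, so that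
`T^m = C_{P,T^m}^∞(∅)`, and this fixpoint equation characterizes stable models.
-/

/-- A rule of a normal logic program: head atom, positive body atoms, default-negated body atoms. -/
structure Rule (α : Type) where
  head : α
  pos : Finset α
  neg : Finset α

/-- The immediate consequence operator `C_{P,J}(I)`. -/
def imCons {α : Type} (P : Set (Rule α)) (J I : Set α) : Set α :=
  { a | ∃ r ∈ P, r.head = a ∧ ↑r.pos ⊆ I ∧ ∀ b ∈ r.neg, b ∉ J }

lemma imCons_mono {α : Type} (P : Set (Rule α)) (J : Set α) : Monotone (imCons P J) := by
  rintro I I' h a ⟨r, hr, hh, hp, hn⟩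
  exact ⟨r, hr, hh, fun x hx => h (hp hx), hn⟩

/-- `C_{P,J}^∞(I)`: the least fixpoint of `C_{P,J}` above `I`, obtained by iterating from `I`. -/
def imConsInf {α : Type} (P : Set (Rule α)) (J I : Set α) : Set α :=
  OrderHom.lfp ⟨fun X => I ∪ imCons P J X,
    fun _ _ h => Set.union_subset_union (le_refl I) (imCons_mono P J h)⟩

/-- The Gelfond–Lifschitz reduct `P^S`. -/
def reduct {α : Type} (P : Set (Rule α)) (S : Set α) : Set (Rule α) :=
  { r' | ∃ r ∈ P, (∀ b ∈ r.neg, b ∉ S) ∧ r' = ⟨r.head, r.pos, ∅⟩ }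

/-- `M` is a model of the program `P`. -/
def isModel {α : Type} (P : Set (Rule α)) (M : Set α) : Prop :=
  ∀ r ∈ P, ↑r.pos ⊆ M → (∀ b ∈ r.neg, b ∉ M) → r.head ∈ M

/-- `S` is a stable model of `P`: `S` is the least model of the reduct `P^S`. -/
def isStableModel {α : Type} (P : Set (Rule α)) (S : Set α) : Prop :=
  isModel (reduct P S) S ∧ ∀ M : Set α, isModel (reduct P S) M → S ⊆ M

section ImmediateConsequence

variable {α : Type} {P : Set (Rule α)} {I J J' M S : Set α}

lemma imCons_anti (I : Set α) : Antitone fun J => imCons P J I := by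
  rintro J' J h a ⟨r, hr, hhead, hpos, hneg⟩
  exact ⟨r, hr, hhead, hpos, fun b hb hbJ' => hneg b hb (h hbJ')⟩

lemma imConsInf_eq_union_imCons (P : Set (Rule α)) (J I : Set α) :
    imConsInf P J I = I ∪ imCons P J (imConsInf P J I) :=
  (OrderHom.map_lfp _).symm

lemma subset_imConsInf : I ⊆ imConsInf P J I :=
  Set.subset_union_left.trans (imConsInf_eq_union_imCons P J I).superset

lemma imCons_imConsInf_subset (P : Set (Rule α)) (J I : Set α) :
    imCons P J (imConsInf P J I) ⊆ imConsInf P J I :=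
  Set.subset_union_right.trans (imConsInf_eq_union_imCons P J I).superset

lemma imConsInf_subset (hI : I ⊆ M) (hM : imCons P J M ⊆ M) : imConsInf P J I ⊆ M :=
  OrderHom.lfp_le _ (Set.union_subset hI hM)

lemma imConsInf_anti (I : Set α) : Antitone fun J => imConsInf P J I := fun _ _ h =>
  imConsInf_subset subset_imConsInf ((imCons_anti _ h).trans (imCons_imConsInf_subset P _ I))

lemma imConsInf_imConsInf_of_subset (h : J' ⊆ J) :
    imConsInf P J' (imConsInf P J I) = imConsInf P J' I :=
  Set.Subset.antisymm
    (imConsInf_subset (imConsInf_anti I h) (imCons_imConsInf_subset P J' I))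
    (imConsInf_subset (subset_imConsInf.trans subset_imConsInf) (imCons_imConsInf_subset P J' _))

lemma isModel_reduct_iff : isModel (reduct P S) M ↔ imCons P S M ⊆ M := by
  constructor
  · rintro hM _ ⟨r, hr, rfl, hpos, hneg⟩
    exact hM ⟨r.head, r.pos, ∅⟩ ⟨r, hr, hneg, rfl⟩ hpos (by simp)
  · rintro hM _ ⟨r, hr, hneg, rfl⟩ hpos -
    exact hM ⟨r, hr, rfl, hpos, hneg⟩

theorem isStableModel_iff_imConsInf_empty_eq : isStableModel P S ↔ imConsInf P S ∅ = S := by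
  simp only [isStableModel, isModel_reduct_iff]
  constructor
  · rintro ⟨hclosed, hleast⟩
    exact Set.Subset.antisymm (imConsInf_subset (Set.empty_subset S) hclosed)
      (hleast _ (imCons_imConsInf_subset P S ∅))
  · intro hfix
    constructor
    · simpa only [hfix] using imCons_imConsInf_subset P S ∅
    · intro M hM
      exact hfix.symm.subset.trans (imConsInf_subset (Set.empty_subset M) hM)

end ImmediateConsequence

/-- The first `m` steps of a DProp run on `P`, with true, false and undecided sets `T k`, `F k` and
`U k`. A decision step is recorded only through `F k ⊆ F (k + 1)`: it may falsify any set of atoms,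
even an empty one or one that meets `T k`. -/
structure IsDPropRun {α : Type} (P : Set (Rule α)) (m : ℕ) (T F U : ℕ → Set α) : Prop where
  true_zero : T 0 = imConsInf P Set.univ ∅
  false_zero : F 0 = ∅
  undecided_zero : U 0 = Set.univ \ (T 0 ∪ F 0)
  false_subset_succ : ∀ k < m, F k ⊆ F (k + 1)
  true_succ : ∀ k < m, T (k + 1) = imConsInf P (Set.univ \ F (k + 1)) (T k)
  undecided_succ : ∀ k < m, U (k + 1) = U k \ (T (k + 1) ∪ F (k + 1))

namespace IsDPropRun

variable {α : Type} {P : Set (Rule α)} {m k : ℕ} {T F U : ℕ → Set α}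

lemma true_subset_succ (h : IsDPropRun P m T F U) (hk : k < m) : T k ⊆ T (k + 1) :=
  h.true_succ k hk ▸ subset_imConsInf

lemma true_eq_imConsInf_empty (h : IsDPropRun P m T F U) (hk : k ≤ m) :
    T k = imConsInf P (Set.univ \ F k) ∅ := by
  induction k with
  | zero => rw [h.true_zero, h.false_zero, Set.sdiff_empty]
  | succ k ih =>
    rw [h.true_succ k hk, ih (Nat.le_of_succ_le hk)]
    exact imConsInf_imConsInf_of_subset (Set.sdiff_subset_sdiff_right (h.false_subset_succ k hk))

lemma undecided_eq_univ_sdiff (h : IsDPropRun P m T F U) (hk : k ≤ m) :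
    U k = Set.univ \ (T k ∪ F k) := by
  induction k with
  | zero => exact h.undecided_zero
  | succ k ih =>
    have hdecided : T k ∪ F k ⊆ T (k + 1) ∪ F (k + 1) :=
      Set.union_subset_union (h.true_subset_succ hk) (h.false_subset_succ k hk)
    rw [h.undecided_succ k hk, ih (Nat.le_of_succ_le hk), Set.sdiff_sdiff,
      Set.union_eq_right.mpr hdecided]

lemma univ_sdiff_false_eq_true (h : IsDPropRun P m T F U) (hdone : U m = ∅)
    (hfree : T m ∩ F m = ∅) : Set.univ \ F m = T m := by
  have hcover : T m ∪ F m = Set.univ :=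
    Set.univ_subset_iff.mp (Set.sdiff_eq_empty.mp (h.undecided_eq_univ_sdiff le_rfl ▸ hdone))
  rw [← hcover, Set.union_sdiff_right, (Set.disjoint_iff_inter_eq_empty.mpr hfree).sdiff_eq_left]

end IsDPropRun

theorem batch_dprop_run_yields_stable_model_general {α : Type} {P : Set (Rule α)} {m : ℕ}
    {T F U : ℕ → Set α} (hrun : IsDPropRun P m T F U) (hdone : U m = ∅)
    (hfree : T m ∩ F m = ∅) : isStableModel P (T m) := by
  rw [isStableModel_iff_imConsInf_empty_eq]
  calc imConsInf P (T m) ∅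
      = imConsInf P (Set.univ \ F m) ∅ := by rw [hrun.univ_sdiff_false_eq_true hdone hfree]
    _ = T m := (hrun.true_eq_imConsInf_empty le_rfl).symm

/-- Batch variant of DProp: each decision adds a nonempty set
`E ⊆ U^{k-1}` of undecided atoms to `F`. If such a run terminates with `U^∞ = ∅` and
`T^∞ ∩ F^∞ = ∅`, its final true set is a stable model of `P`. -/
theorem batch_dprop_run_yields_stable_model {α : Type} [Fintype α]
    (P : Set (Rule α)) (m : ℕ) (T F U : ℕ → Set α)
    (hT0 : T 0 = imConsInf P Set.univ ∅)
    (hF0 : F 0 = (∅ : Set α))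
    (hU0 : U 0 = Set.univ \ (T 0 ∪ F 0))
    (hdec : ∀ k, 1 ≤ k → k ≤ m →
      ∃ E : Set α, E ⊆ U (k - 1) ∧ E.Nonempty ∧ F k = F (k - 1) ∪ E)
    (hprop : ∀ k, 1 ≤ k → k ≤ m → T k = imConsInf P (Set.univ \ F k) (T (k - 1)))
    (hupd : ∀ k, 1 ≤ k → k ≤ m → U k = U (k - 1) \ (T k ∪ F k))
    (hdone : U m = ∅)
    (hfree : T m ∩ F m = ∅) :
    isStableModel P (T m) := by
  have hF (k : ℕ) (hk : k < m) : F k ⊆ F (k + 1) :=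
    (hdec (k + 1) k.succ_pos hk).elim fun _ hE => hE.2.2 ▸ Set.subset_union_left
  exact batch_dprop_run_yields_stable_model_general ⟨hT0, hF0, hU0, hF,
    fun k => hprop (k + 1) k.succ_pos, fun k => hupd (k + 1) k.succ_pos⟩ hdone hfree
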